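/- arXiv:1507.05304 — 3 statements merged into one kernel-verified Lean document; each statement's English description precedes it below -/
import Mathlib

section
/- Let f be twice continuously differentiable on [a,b], M = sup{f''(x) : x ∈ [a,b]} and m = inf{f''(x) : x ∈ [a,b]}. Then for all x, y, z ∈ [a,b]: (M/36)·((x−y)² + (y−z)² + (z−x)²) ≥ (f(x)+f(y)+f(z))/3 + f((x+y+z)/3) − (2/3)·(f((x+y)/2) + f((y+z)/2) + f((z+x)/2)) ≥ (m/36)·((x−y)² + (y−z)² + (z−x)²). -/
/-- Popoviciu's inequality when `x` and `y` lie on the same side of the mean of `x`, `y`, `z`. -/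
theorem ConvexOn.popoviciu_of_same_side {s : Set ℝ} {g : ℝ → ℝ} (hg : ConvexOn ℝ s g)
    {x y z : ℝ} (hx : x ∈ s) (hy : y ∈ s) (hz : z ∈ s)
    (hside : 0 ≤ ((x + y + z) / 3 - x) * ((x + y + z) / 3 - y)) :
    (2 / 3) * (g ((x + y) / 2) + g ((y + z) / 2) + g ((z + x) / 2)) ≤
      (g x + g y + g z) / 3 + g ((x + y + z) / 3) := by
  have hmid : (x + y) / 2 ∈ s := by
    convert hg.1 hx hy (by norm_num : (0 : ℝ) ≤ 1 / 2) (by norm_num : (0 : ℝ) ≤ 1 / 2)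
      (by norm_num) using 1
    simp only [smul_eq_mul]; ring
  have hc : (x + y + z) / 3 ∈ s := by
    convert hg.1 hmid hz (by norm_num : (0 : ℝ) ≤ 2 / 3) (by norm_num : (0 : ℝ) ≤ 1 / 3)
      (by norm_num) using 1
    simp only [smul_eq_mul]; ring
  have hxy : g ((x + y) / 2) ≤ (g x + g y) / 2 := by
    have h := hg.2 hx hy (by norm_num : (0 : ℝ) ≤ 1 / 2) (by norm_num : (0 : ℝ) ≤ 1 / 2)
      (by norm_num)
    simp only [smul_eq_mul] at h
    rw [show 1 / 2 * x + 1 / 2 * y = (x + y) / 2 by ring] at h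
    linarith
  obtain ⟨c, hcdef⟩ : ∃ c, c = (x + y + z) / 3 := ⟨_, rfl⟩
  rw [← hcdef] at hside hc ⊢
  obtain ⟨p, q, hp, hq, hpq, hpx, hqy⟩ : ∃ p q : ℝ, 0 ≤ p ∧ 0 ≤ q ∧ p + q = 1 / 2 ∧
      c - x = 2 * p * (z - c) ∧ c - y = 2 * q * (z - c) := by
    have hz' : z - c = (c - x) + (c - y) := by linarith
    by_cases h0 : z - c = 0
    · have hx0 : c - x = 0 := by nlinarith
      exact ⟨1 / 4, 1 / 4, by norm_num, by norm_num, by norm_num, by rw [hx0, h0]; ring,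
        by rw [h0]; linarith⟩
    · refine ⟨(c - x) * (z - c) / (2 * (z - c) ^ 2), (c - y) * (z - c) / (2 * (z - c) ^ 2),
        div_nonneg (by rw [hz']; nlinarith [sq_nonneg (c - x)]) (by positivity),
        div_nonneg (by rw [hz']; nlinarith [sq_nonneg (c - y)]) (by positivity), ?_, by field_simp, by field_simp⟩
      field_simp
      linarith
  have key : ∀ t w : ℝ, 0 ≤ t → t ≤ 1 → w = (1 - t) * c + t * z →
      g w ≤ (1 - t) * g c + t * g z := by
    intro t w ht ht1 hw
    simpa [hw] using hg.2 hc hz (sub_nonneg.2 ht1) ht (by ring)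
  have h₁ := key p ((y + z) / 2) hp (by linarith) (by linarith)
  have h₂ := key q ((z + x) / 2) hq (by linarith) (by linarith)
  have h₃ : p * g z + q * g z = g z / 2 := by rw [← add_mul, hpq]; ring
  have h₄ : p * g c + q * g c = g c / 2 := by rw [← add_mul, hpq]; ring
  linarith

/-- **Popoviciu's inequality** for convex functions. -/
theorem ConvexOn.popoviciu {s : Set ℝ} {g : ℝ → ℝ} (hg : ConvexOn ℝ s g)
    {x y z : ℝ} (hx : x ∈ s) (hy : y ∈ s) (hz : z ∈ s) :
    (2 / 3) * (g ((x + y) / 2) + g ((y + z) / 2) + g ((z + x) / 2)) ≤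
      (g x + g y + g z) / 3 + g ((x + y + z) / 3) := by
  by_cases h₁ : 0 ≤ ((x + y + z) / 3 - x) * ((x + y + z) / 3 - y)
  · exact hg.popoviciu_of_same_side hx hy hz h₁
  by_cases h₂ : 0 ≤ ((x + y + z) / 3 - y) * ((x + y + z) / 3 - z)
  · have hr : y + z + x = x + y + z := by ring
    have h := hg.popoviciu_of_same_side hy hz hx (by rwa [hr])
    rw [hr] at h
    linarith
  · have hr : z + x + y = x + y + z := by ring
    have h := hg.popoviciu_of_same_side hz hx hy (by
      rw [hr]
      by_contra h₃
      push Not at h₁ h₂ h₃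
      have := mul_pos_of_neg_of_neg h₁ h₂
      nlinarith [sq_nonneg ((x + y + z) / 3 - y)])
    rw [hr] at h
    linarith

/-- If `f'' ≥ k` on `[a, b]`, then `f - k t² / 2` is convex there. -/
theorem convexOn_sub_sq_of_le_deriv2 {a b k : ℝ} {f f' f'' : ℝ → ℝ}
    (hf' : ∀ x ∈ Set.Icc a b, HasDerivWithinAt f (f' x) (Set.Icc a b) x)
    (hf'' : ∀ x ∈ Set.Icc a b, HasDerivWithinAt f' (f'' x) (Set.Icc a b) x)
    (hk : ∀ x ∈ Set.Icc a b, k ≤ f'' x) :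
    ConvexOn ℝ (Set.Icc a b) (fun t ↦ f t - k / 2 * t ^ 2) := by
  refine convexOn_of_hasDerivWithinAt2_nonneg (convex_Icc a b) (f' := fun t ↦ f' t - k * t)
    (f'' := fun t ↦ f'' t - k) ?_ ?_ ?_ ?_
  · exact ContinuousOn.sub (fun x hx ↦ (hf' x hx).continuousWithinAt) (by fun_prop)
  · intro x hx
    refine (((hf' x (interior_subset hx)).mono interior_subset).sub
      ((hasDerivAt_pow 2 x).const_mul (k / 2)).hasDerivWithinAt).congr_deriv ?_
    norm_num
    ring
  · intro x hx
    exact (((hf'' x (interior_subset hx)).mono interior_subset).sub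
      ((hasDerivAt_id x).const_mul k).hasDerivWithinAt).congr_deriv (by ring)
  · exact fun x hx ↦ sub_nonneg.2 (hk x (interior_subset hx))

/-- Popoviciu's inequality with a quadratic remainder, for `f'' ≥ k`. -/
theorem popoviciu_of_le_deriv2 {a b k : ℝ} {f f' f'' : ℝ → ℝ}
    (hf' : ∀ x ∈ Set.Icc a b, HasDerivWithinAt f (f' x) (Set.Icc a b) x)
    (hf'' : ∀ x ∈ Set.Icc a b, HasDerivWithinAt f' (f'' x) (Set.Icc a b) x)
    (hk : ∀ x ∈ Set.Icc a b, k ≤ f'' x) {x y z : ℝ}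
    (hx : x ∈ Set.Icc a b) (hy : y ∈ Set.Icc a b) (hz : z ∈ Set.Icc a b) :
    (k / 36) * ((x - y) ^ 2 + (y - z) ^ 2 + (z - x) ^ 2) ≤
      (f x + f y + f z) / 3 + f ((x + y + z) / 3) -
        (2 / 3) * (f ((x + y) / 2) + f ((y + z) / 2) + f ((z + x) / 2)) := by
  have h := (convexOn_sub_sq_of_le_deriv2 hf' hf'' hk).popoviciu hx hy hz
  linarith

/-- Popoviciu-type two-sided estimate for `C²` functions on `[a,b]`, with
`M = sup f''` and `m = inf f''` on `[a,b]`. -/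
theorem popoviciu_C2 (a b : ℝ) (hab : a ≤ b) (f f' f'' : ℝ → ℝ)
    (hf' : ∀ x ∈ Set.Icc a b, HasDerivWithinAt f (f' x) (Set.Icc a b) x)
    (hf'' : ∀ x ∈ Set.Icc a b, HasDerivWithinAt f' (f'' x) (Set.Icc a b) x)
    (hcont : ContinuousOn f'' (Set.Icc a b))
    (M m : ℝ) (hM : M = sSup (f'' '' Set.Icc a b)) (hm : m = sInf (f'' '' Set.Icc a b)) :
    ∀ x ∈ Set.Icc a b, ∀ y ∈ Set.Icc a b, ∀ z ∈ Set.Icc a b,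
      (M / 36) * ((x - y) ^ 2 + (y - z) ^ 2 + (z - x) ^ 2) ≥
        (f x + f y + f z) / 3 + f ((x + y + z) / 3) -
          (2 / 3) * (f ((x + y) / 2) + f ((y + z) / 2) + f ((z + x) / 2)) ∧
      (f x + f y + f z) / 3 + f ((x + y + z) / 3) -
          (2 / 3) * (f ((x + y) / 2) + f ((y + z) / 2) + f ((z + x) / 2)) ≥
        (m / 36) * ((x - y) ^ 2 + (y - z) ^ 2 + (z - x) ^ 2) := by
  intro x hx y hy z hz
  have hcompact : IsCompact (f'' '' Set.Icc a b) := isCompact_Icc.image_of_continuousOn hcont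
  constructor
  · have h := popoviciu_of_le_deriv2 (k := -M) (fun x hx ↦ (hf' x hx).neg)
      (fun x hx ↦ (hf'' x hx).neg)
      (fun t ht ↦ neg_le_neg (hM ▸ le_csSup hcompact.bddAbove (Set.mem_image_of_mem f'' ht)))
      hx hy hz
    simp only [Pi.neg_apply] at h
    linarith
  · exact popoviciu_of_le_deriv2 hf' hf''
      (fun t ht ↦ hm ▸ csInf_le hcompact.bddBelow (Set.mem_image_of_mem f'' ht)) hx hy hz
end

section
/- Jensen's inequality for (M_φ, M_ψ)-convex functions: if φ is continuous and strictly monotone on an interval I ⊆ ℝ, ψ is continuous and strictly monotone on an interval J ⊆ ℝ, and f : I → J is (M_φ, M_ψ)-convex, then for all n ≥ 1, points x₁,…,xₙ ∈ I and weights λ₁,…,λₙ ∈ [0,1] with λ₁+⋯+λₙ = 1, one has f(φ⁻¹(Σₖ λₖ φ(xₖ))) ≤ ψ⁻¹(Σₖ λₖ ψ(f(xₖ))). -/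
open Set

/-- A continuous midpoint-convex function on a convex set is convex. -/
theorem ContinuousOn.convexOn_of_midpoint {E : Type*} [AddCommGroup E] [Module ℝ E]
    [TopologicalSpace E] [ContinuousAdd E] [ContinuousSMul ℝ E] {s : Set E} {g : E → ℝ}
    (hs : Convex ℝ s) (hg : ContinuousOn g s)
    (hmid : ∀ x ∈ s, ∀ y ∈ s, g ((2⁻¹ : ℝ) • (x + y)) ≤ (g x + g y) / 2) :
    ConvexOn ℝ s g := by
  refine ⟨hs, fun x hx y hy a b ha hb hab => ?_⟩
  let p : ℝ → E := fun t => (1 - t) • x + t • y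
  let h : ℝ → ℝ := fun t => g (p t) - ((1 - t) * g x + t * g y)
  have hp : MapsTo p (Icc 0 1) s := fun t ht =>
    hs hx hy (by linarith [ht.2]) ht.1 (by ring)
  have hpc : Continuous p := by fun_prop
  have hhc : ContinuousOn h (Icc 0 1) :=
    (hg.comp hpc.continuousOn hp).sub (by fun_prop)
  have h0 : h 0 = 0 := by simp [h, p]
  have h1 : h 1 = 0 := by simp [h, p]
  have hhmid : ∀ t ∈ Icc (0 : ℝ) 1, ∀ u ∈ Icc (0 : ℝ) 1,
      h ((t + u) / 2) ≤ (h t + h u) / 2 := by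
    intro t ht u hu
    have hpm : p ((t + u) / 2) = (2⁻¹ : ℝ) • (p t + p u) := by
      simp only [p]; module
    have := hmid _ (hp ht) _ (hp hu)
    simp only [h, hpm]
    linarith
  obtain ⟨m, hm, hmax⟩ := isCompact_Icc.exists_isMaxOn (nonempty_Icc.2 zero_le_one) hhc
  have hle : ∀ t ∈ Icc (0 : ℝ) 1, h t ≤ h m := fun t ht => hmax ht
  have hm0 : h m ≤ 0 := by
    rcases le_total m (1 / 2) with hm2 | hm2
    · have hu : 2 * m ∈ Icc (0 : ℝ) 1 := ⟨by linarith [hm.1], by linarith⟩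
      have := hhmid 0 (by simp) _ hu
      rw [show (0 + 2 * m) / 2 = m by ring] at this
      linarith [hle _ hu]
    · have hu : 2 * m - 1 ∈ Icc (0 : ℝ) 1 := ⟨by linarith, by linarith [hm.2]⟩
      have := hhmid 1 (by simp) _ hu
      rw [show (1 + (2 * m - 1)) / 2 = m by ring] at this
      linarith [hle _ hu]
  have hb1 := (hle b ⟨hb, by linarith⟩).trans hm0
  obtain rfl : a = 1 - b := by linarith
  simp only [h, p] at hb1
  simp only [smul_eq_mul]
  linarith

/-- The continuous image of a convex subset of the line is convex. -/
theorem Convex.image_of_continuousOn {s : Set ℝ} {φ : ℝ → ℝ} (hs : Convex ℝ s)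
    (hφ : ContinuousOn φ s) : Convex ℝ (φ '' s) :=
  Real.convex_iff_isPreconnected.2 (hs.isPreconnected.image φ hφ)

/-- A left inverse of a continuous strictly monotone function on an interval is continuous. -/
theorem StrictMonoOn.continuousOn_leftInverse {s : Set ℝ} {φ φinv : ℝ → ℝ} (hs : Convex ℝ s)
    (hφ : ContinuousOn φ s) (hm : StrictMonoOn φ s) (hinv : LeftInvOn φinv φ s) :
    ContinuousOn φinv (φ '' s) := by
  have := hs.ordConnected
  have := (hs.image_of_continuousOn hφ).ordConnected
  have hc := continuous_subtype_val.comp (hm.orderIso φ s).symm.continuous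
  rw [continuousOn_iff_continuous_domRestrict]
  refine hc.congr fun y => ?_
  obtain ⟨x, rfl⟩ := (hm.orderIso φ s).surjective y
  simp only [Function.comp_apply, OrderIso.symm_apply_apply]
  exact (hinv x.2).symm

/-- A left inverse of a continuous strictly antitone function on an interval is continuous. -/
theorem StrictAntiOn.continuousOn_leftInverse {s : Set ℝ} {φ φinv : ℝ → ℝ} (hs : Convex ℝ s)
    (hφ : ContinuousOn φ s) (hm : StrictAntiOn φ s) (hinv : LeftInvOn φinv φ s) :
    ContinuousOn φinv (φ '' s) := by
  have h := StrictMonoOn.continuousOn_leftInverse (φinv := fun y => φinv (-y)) hs hφ.neg hm.neg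
    fun x hx => by simpa using hinv hx
  have hmaps : MapsTo Neg.neg (φ '' s) ((-φ) '' s) := by
    rintro _ ⟨x, hx, rfl⟩
    exact ⟨x, hx, rfl⟩
  simpa [Function.comp_def] using h.comp continuous_neg.continuousOn hmaps

/-- Jensen's inequality for `(M_φ, M_ψ)`-convex functions with `ψ` increasing. -/
theorem jensen_quasi_arithmetic_of_strictMonoOn {ι : Type*} [Fintype ι] {I J : Set ℝ}
    (hI : Convex ℝ I) (hJ : Convex ℝ J) {φ ψ f φinv ψinv : ℝ → ℝ}
    (hφc : ContinuousOn φ I) (hφm : StrictMonoOn φ I ∨ StrictAntiOn φ I)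
    (hψc : ContinuousOn ψ J) (hψm : StrictMonoOn ψ J)
    (hfc : ContinuousOn f I) (hfm : MapsTo f I J)
    (hφinv : LeftInvOn φinv φ I) (hψinv : LeftInvOn ψinv ψ J)
    (hconv : ∀ x ∈ I, ∀ y ∈ I,
      f (φinv ((φ x + φ y) / 2)) ≤ ψinv ((ψ (f x) + ψ (f y)) / 2))
    {x w : ι → ℝ} (hx : ∀ i, x i ∈ I) (hw : ∀ i, 0 ≤ w i) (hw1 : ∑ i, w i = 1) :
    f (φinv (∑ i, w i * φ (x i))) ≤ ψinv (∑ i, w i * ψ (f (x i))) := by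
  have hK : Convex ℝ (φ '' I) := hI.image_of_continuousOn hφc
  have hL : Convex ℝ (ψ '' J) := hJ.image_of_continuousOn hψc
  have hinvm : MapsTo φinv (φ '' I) I := by
    rintro _ ⟨t, ht, rfl⟩
    rwa [hφinv ht]
  have hinvc : ContinuousOn φinv (φ '' I) :=
    hφm.elim (fun h => h.continuousOn_leftInverse hI hφc hφinv)
      fun h => h.continuousOn_leftInverse hI hφc hφinv
  have hle_iff : ∀ y ∈ J, ∀ z ∈ ψ '' J, y ≤ ψinv z ↔ ψ y ≤ z := by
    rintro y hy _ ⟨t, ht, rfl⟩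
    rw [hψinv ht, hψm.le_iff_le hy ht]
  have hg : ConvexOn ℝ (φ '' I) (fun u => ψ (f (φinv u))) := by
    refine ContinuousOn.convexOn_of_midpoint hK
      (hψc.comp (hfc.comp hinvc hinvm) (hfm.comp hinvm)) ?_
    rintro _ ⟨s, hs, rfl⟩ _ ⟨t, ht, rfl⟩
    have half_mem : ∀ {S : Set ℝ}, Convex ℝ S → ∀ {a b : ℝ}, a ∈ S → b ∈ S →
        (a + b) / 2 ∈ S := by
      intro S hS a b ha hb
      have := hS.midpoint_mem ha hb
      rwa [midpoint_eq_smul_add, smul_eq_mul, invOf_eq_inv, inv_mul_eq_div] at this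
    rw [hφinv hs, hφinv ht, smul_eq_mul, inv_mul_eq_div]
    exact (hle_iff _ (hfm (hinvm (half_mem hK (mem_image_of_mem φ hs) (mem_image_of_mem φ ht)))) _
      (half_mem hL (mem_image_of_mem ψ (hfm hs)) (mem_image_of_mem ψ (hfm ht)))).1
      (hconv s hs t ht)
  have hmemK : ∑ i, w i * φ (x i) ∈ φ '' I :=
    hK.sum_mem (fun i _ => hw i) hw1 fun i _ => mem_image_of_mem φ (hx i)
  have hmemL : ∑ i, w i * ψ (f (x i)) ∈ ψ '' J :=
    hL.sum_mem (fun i _ => hw i) hw1 fun i _ => mem_image_of_mem ψ (hfm (hx i))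
  refine (hle_iff _ (hfm (hinvm hmemK)) _ hmemL).2 ?_
  have hjensen := hg.map_sum_le (t := Finset.univ) (p := fun i => φ (x i)) (fun i _ => hw i) hw1
    fun i _ => mem_image_of_mem φ (hx i)
  simpa only [smul_eq_mul, fun i => hφinv (hx i)] using hjensen

/-- Jensen's inequality for `(M_φ, M_ψ)`-convex functions. -/
theorem jensen_quasi_arithmetic (I J : Set ℝ) (hI : Convex ℝ I) (hJ : Convex ℝ J)
    (φ ψ f φinv ψinv : ℝ → ℝ)
    (hφc : ContinuousOn φ I) (hφm : StrictMonoOn φ I ∨ StrictAntiOn φ I)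
    (hψc : ContinuousOn ψ J) (hψm : StrictMonoOn ψ J ∨ StrictAntiOn ψ J)
    (hfc : ContinuousOn f I) (hfm : Set.MapsTo f I J)
    (hφinv : ∀ x ∈ I, φinv (φ x) = x) (hφinvm : Set.MapsTo φinv (φ '' I) I)
    (hψinv : ∀ y ∈ J, ψinv (ψ y) = y) (hψinvm : Set.MapsTo ψinv (ψ '' J) J)
    (hconv : ∀ x ∈ I, ∀ y ∈ I,
      f (φinv ((φ x + φ y) / 2)) ≤ ψinv ((ψ (f x) + ψ (f y)) / 2)) :
    ∀ n : ℕ, 1 ≤ n → ∀ x : Fin n → ℝ, ∀ w : Fin n → ℝ,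
      (∀ i, x i ∈ I) → (∀ i, w i ∈ Set.Icc (0 : ℝ) 1) → ∑ i, w i = 1 →
      f (φinv (∑ i, w i * φ (x i))) ≤ ψinv (∑ i, w i * ψ (f (x i))) := by
  intro n _ x w hx hw hw1
  rcases hψm with hψm | hψm
  · exact jensen_quasi_arithmetic_of_strictMonoOn hI hJ hφc hφm hψc hψm hfc hfm hφinv hψinv hconv
      hx (fun i => (hw i).1) hw1
  · have h := jensen_quasi_arithmetic_of_strictMonoOn (ψ := -ψ) (ψinv := fun y => ψinv (-y))
      hI hJ hφc hφm hψc.neg hψm.neg hfc hfm hφinv (fun y hy => by simpa using hψinv y hy)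
      (fun s hs t ht => by
        have hneg : -(((-ψ) (f s) + (-ψ) (f t)) / 2) = (ψ (f s) + ψ (f t)) / 2 := by
          simp only [Pi.neg_apply]; ring
        simpa only [hneg] using hconv s hs t ht)
      hx (fun i => (hw i).1) hw1
    simpa using h
end

section
/- Popoviciu-type inequality for h-Jensen pairs: let h : (0,1) → (0,∞) be concave with h(λ)+h(1−λ) ≥ 1 for all λ ∈ (0,1), let I ⊆ ℝ be an interval, and let f, g : I → ℝ be positive functions such that f((1−λ)x + λy) ≤ h(1−λ)g(x) + h(λ)g(y) for all x, y ∈ I and λ ∈ (0,1). Then for all x, y, z ∈ I: max{h(1/2), 2·h(1/4)}·(g(x) + g(y) + g(z)) + 2·h(3/4)·g((x+y+z)/3) ≥ f((x+y)/2) + f((y+z)/2) + f((z+x)/2). -/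
open Filter Topology

theorem ConcaveOn.add_le_two_mul_midpoint {S : Set ℝ} {h : ℝ → ℝ} (hconc : ConcaveOn ℝ S h)
    {a b c : ℝ} (ha : a ∈ S) (hb : b ∈ S) (hab : a + b = 2 * c) :
    h a + h b ≤ 2 * h c := by
  have key := hconc.2 ha hb (by norm_num : (0 : ℝ) ≤ 1 / 2) (by norm_num : (0 : ℝ) ≤ 1 / 2)
    (by norm_num)
  have hc : (1 / 2 : ℝ) • a + (1 / 2 : ℝ) • b = c := by
    simp only [smul_eq_mul]
    linarith
  rw [hc] at key
  simp only [smul_eq_mul] at key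
  linarith

section

variable {h f g : ℝ → ℝ} {I : Set ℝ}

/-- This is `h (1 - l) + h l` at the missing endpoint `l = 0`, obtained as a limit using the
continuity of `h` at `1 / 2`. -/
theorem hJensenPair_self_le (hconc : ConcaveOn ℝ (Set.Ioo (0 : ℝ) 1) h)
    (hgpos : ∀ t ∈ I, 0 < g t)
    (hpair : ∀ x ∈ I, ∀ y ∈ I, ∀ l ∈ Set.Ioo (0 : ℝ) 1,
      f ((1 - l) * x + l * y) ≤ h (1 - l) * g x + h l * g y)
    {m : ℝ} (hm : m ∈ I) :
    f m ≤ (2 * h (3 / 4) + 2 * h (1 / 4) - (h (1 / 2) + h (1 / 2))) * g m := by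
  have hcont : ContinuousAt h (1 / 2) :=
    (hconc.continuousOn isOpen_Ioo).continuousAt (Ioo_mem_nhds (by norm_num) (by norm_num))
  have hadd : Tendsto (fun l : ℝ => h (1 / 2 + l)) (𝓝[>] 0) (𝓝 (h (1 / 2))) := by
    refine (hcont.tendsto.comp ?_).mono_left nhdsWithin_le_nhds
    exact (by fun_prop : Continuous fun l : ℝ => 1 / 2 + l).tendsto' 0 (1 / 2) (by norm_num)
  have hsub : Tendsto (fun l : ℝ => h (1 / 2 - l)) (𝓝[>] 0) (𝓝 (h (1 / 2))) := by
    refine (hcont.tendsto.comp ?_).mono_left nhdsWithin_le_nhds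
    exact (by fun_prop : Continuous fun l : ℝ => 1 / 2 - l).tendsto' 0 (1 / 2) (by norm_num)
  have hlim := ((tendsto_const_nhds (x := 2 * h (3 / 4) + 2 * h (1 / 4))).sub
    (hadd.add hsub)).mul_const (g m)
  refine ge_of_tendsto hlim ?_
  filter_upwards [Ioo_mem_nhdsGT (by norm_num : (0 : ℝ) < 1 / 2)] with l hl
  obtain ⟨hl0, hl1⟩ := hl
  have hfm := hpair m hm m hm l ⟨hl0, by linarith⟩
  rw [← add_mul, ← add_mul, sub_add_cancel, one_mul] at hfm
  have hhigh : h (1 - l) + h (1 / 2 + l) ≤ 2 * h (3 / 4) :=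
    hconc.add_le_two_mul_midpoint ⟨by linarith, by linarith⟩ ⟨by linarith, by linarith⟩ (by ring)
  have hlow : h l + h (1 / 2 - l) ≤ 2 * h (1 / 4) :=
    hconc.add_le_two_mul_midpoint ⟨by linarith, by linarith⟩ ⟨by linarith, by linarith⟩ (by ring)
  exact hfm.trans (mul_le_mul_of_nonneg_right (by linarith) (hgpos m hm).le)

theorem hJensenPair_add_le_of_weights_add_eq_half (hconc : ConcaveOn ℝ (Set.Ioo (0 : ℝ) 1) h)
    (hgpos : ∀ t ∈ I, 0 < g t)
    (hpair : ∀ x ∈ I, ∀ y ∈ I, ∀ l ∈ Set.Ioo (0 : ℝ) 1,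
      f ((1 - l) * x + l * y) ≤ h (1 - l) * g x + h l * g y)
    {m z : ℝ} (hm : m ∈ I) (hz : z ∈ I) {s t : ℝ} (hs : 0 < s) (ht : 0 < t)
    (hst : s + t = 1 / 2) :
    f ((1 - s) * m + s * z) + f ((1 - t) * m + t * z) ≤
      2 * h (3 / 4) * g m + 2 * h (1 / 4) * g z := by
  have hfs := hpair m hm z hz s ⟨hs, by linarith⟩
  have hft := hpair m hm z hz t ⟨ht, by linarith⟩
  have hhigh : h (1 - s) + h (1 - t) ≤ 2 * h (3 / 4) :=
    hconc.add_le_two_mul_midpoint ⟨by linarith, by linarith⟩ ⟨by linarith, by linarith⟩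
      (by linarith)
  have hlow : h s + h t ≤ 2 * h (1 / 4) :=
    hconc.add_le_two_mul_midpoint ⟨by linarith, by linarith⟩ ⟨by linarith, by linarith⟩
      (by linarith)
  have := mul_le_mul_of_nonneg_right hhigh (hgpos m hm).le
  have := mul_le_mul_of_nonneg_right hlow (hgpos z hz).le
  linarith

theorem hJensenPair_midpoint_le
    (hpair : ∀ x ∈ I, ∀ y ∈ I, ∀ l ∈ Set.Ioo (0 : ℝ) 1,
      f ((1 - l) * x + l * y) ≤ h (1 - l) * g x + h l * g y)
    {x y : ℝ} (hx : x ∈ I) (hy : y ∈ I) :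
    f ((x + y) / 2) ≤ h (1 / 2) * (g x + g y) := by
  have key := hpair x hx y hy (1 / 2) ⟨by norm_num, by norm_num⟩
  have hxy : (1 - 1 / 2) * x + 1 / 2 * y = (x + y) / 2 := by ring
  have hhalf : (1 - 1 / 2 : ℝ) = 1 / 2 := by norm_num
  rw [hxy, hhalf] at key
  linarith

theorem hJensenPair_popoviciu_of_eq_mean (hconc : ConcaveOn ℝ (Set.Ioo (0 : ℝ) 1) h)
    (hgpos : ∀ t ∈ I, 0 < g t)
    (hpair : ∀ x ∈ I, ∀ y ∈ I, ∀ l ∈ Set.Ioo (0 : ℝ) 1,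
      f ((1 - l) * x + l * y) ≤ h (1 - l) * g x + h l * g y)
    {x y z m : ℝ} (hx : x ∈ I) (hy : y ∈ I) (hz : z ∈ I) (hm : x + y + z = 3 * m)
    (hzm : z = m) :
    f ((x + y) / 2) + f ((y + z) / 2) + f ((z + x) / 2) ≤
      max (h (1 / 2)) (2 * h (1 / 4)) * (g x + g y + g z) + 2 * h (3 / 4) * g m := by
  subst hzm
  have hxy : (x + y) / 2 = z := by linarith
  rw [hxy]
  have hself := hJensenPair_self_le hconc hgpos hpair hz
  have hyz := hJensenPair_midpoint_le hpair hy hz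
  have hzx := hJensenPair_midpoint_le hpair hz hx
  have := mul_le_mul_of_nonneg_right (le_max_left (h (1 / 2)) (2 * h (1 / 4)))
    (add_pos (hgpos x hx) (hgpos y hy)).le
  have := mul_le_mul_of_nonneg_right (le_max_right (h (1 / 2)) (2 * h (1 / 4))) (hgpos z hz).le
  linarith

theorem hJensenPair_popoviciu_of_same_side (hconc : ConcaveOn ℝ (Set.Ioo (0 : ℝ) 1) h)
    (hgpos : ∀ t ∈ I, 0 < g t)
    (hpair : ∀ x ∈ I, ∀ y ∈ I, ∀ l ∈ Set.Ioo (0 : ℝ) 1,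
      f ((1 - l) * x + l * y) ≤ h (1 - l) * g x + h l * g y)
    {x y z m : ℝ} (hx : x ∈ I) (hy : y ∈ I) (hz : z ∈ I) (hmI : m ∈ I)
    (hm : x + y + z = 3 * m) (hside : 0 < (x - m) * (y - m)) :
    f ((x + y) / 2) + f ((y + z) / 2) + f ((z + x) / 2) ≤
      max (h (1 / 2)) (2 * h (1 / 4)) * (g x + g y + g z) + 2 * h (3 / 4) * g m := by
  obtain rfl : z = 3 * m - x - y := by linarith
  set z := 3 * m - x - y with hz_def
  have hpos_div : 0 < (m - x) / (2 * (z - m)) ∧ 0 < (m - y) / (2 * (z - m)) := by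
    rcases pos_and_pos_or_neg_and_neg_of_mul_pos hside with ⟨h1, h2⟩ | ⟨h1, h2⟩
    · exact ⟨div_pos_of_neg_of_neg (by linarith) (by linarith),
        div_pos_of_neg_of_neg (by linarith) (by linarith)⟩
    · exact ⟨div_pos (by linarith) (by linarith), div_pos (by linarith) (by linarith)⟩
  have hzm : z - m ≠ 0 := by
    intro h0
    simp [h0] at hpos_div
  have hpair_sum := hJensenPair_add_le_of_weights_add_eq_half hconc hgpos hpair hmI hz
    hpos_div.1 hpos_div.2 (by field_simp; linarith)
  have hyz : (1 - (m - x) / (2 * (z - m))) * m + (m - x) / (2 * (z - m)) * z = (y + z) / 2 := by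
    field_simp
    rw [hz_def]
    ring
  have hzx : (1 - (m - y) / (2 * (z - m))) * m + (m - y) / (2 * (z - m)) * z = (z + x) / 2 := by
    field_simp
    rw [hz_def]
    ring
  rw [hyz, hzx] at hpair_sum
  have hxy := hJensenPair_midpoint_le hpair hx hy
  have := mul_le_mul_of_nonneg_right (le_max_left (h (1 / 2)) (2 * h (1 / 4)))
    (add_pos (hgpos x hx) (hgpos y hy)).le
  have := mul_le_mul_of_nonneg_right (le_max_right (h (1 / 2)) (2 * h (1 / 4))) (hgpos z hz).le
  linarith

theorem hJensenPair_popoviciu_of_same_side_or_eq (hconc : ConcaveOn ℝ (Set.Ioo (0 : ℝ) 1) h)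
    (hgpos : ∀ t ∈ I, 0 < g t)
    (hpair : ∀ x ∈ I, ∀ y ∈ I, ∀ l ∈ Set.Ioo (0 : ℝ) 1,
      f ((1 - l) * x + l * y) ≤ h (1 - l) * g x + h l * g y)
    {x y z m : ℝ} (hx : x ∈ I) (hy : y ∈ I) (hz : z ∈ I) (hmI : m ∈ I)
    (hm : x + y + z = 3 * m) (hcase : 0 < (x - m) * (y - m) ∨ z = m) :
    f ((x + y) / 2) + f ((y + z) / 2) + f ((z + x) / 2) ≤
      max (h (1 / 2)) (2 * h (1 / 4)) * (g x + g y + g z) + 2 * h (3 / 4) * g m :=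
  hcase.elim (hJensenPair_popoviciu_of_same_side hconc hgpos hpair hx hy hz hmI hm)
    (hJensenPair_popoviciu_of_eq_mean hconc hgpos hpair hx hy hz hm)

end

theorem same_side_or_eq_of_three (a b c m : ℝ) :
    (0 < (a - m) * (b - m) ∨ c = m) ∨ (0 < (b - m) * (c - m) ∨ a = m) ∨
      (0 < (c - m) * (a - m) ∨ b = m) := by
  rcases lt_trichotomy a m with ha | ha | ha <;> rcases lt_trichotomy b m with hb | hb | hb <;>
    rcases lt_trichotomy c m with hc | hc | hc <;>
    simp [mul_pos_iff, *]

/-- Popoviciu-type inequality for `h`-Jensen pairs of positive functions. -/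
theorem popoviciu_h_jensen_pair (h : ℝ → ℝ)
    (hpos : ∀ l ∈ Set.Ioo (0 : ℝ) 1, 0 < h l)
    (hconc : ConcaveOn ℝ (Set.Ioo (0 : ℝ) 1) h)
    (hsum : ∀ l ∈ Set.Ioo (0 : ℝ) 1, 1 ≤ h l + h (1 - l))
    (I : Set ℝ) (hI : Convex ℝ I) (f g : ℝ → ℝ)
    (hfpos : ∀ t ∈ I, 0 < f t) (hgpos : ∀ t ∈ I, 0 < g t)
    (hpair : ∀ x ∈ I, ∀ y ∈ I, ∀ l ∈ Set.Ioo (0 : ℝ) 1,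
      f ((1 - l) * x + l * y) ≤ h (1 - l) * g x + h l * g y) :
    ∀ x ∈ I, ∀ y ∈ I, ∀ z ∈ I,
      max (h (1 / 2)) (2 * h (1 / 4)) * (g x + g y + g z) +
          2 * h (3 / 4) * g ((x + y + z) / 3) ≥
        f ((x + y) / 2) + f ((y + z) / 2) + f ((z + x) / 2) := by
  intro x hx y hy z hz
  have hm : (x + y + z) / 3 ∈ I := by
    have hxy := hI hx hy (by norm_num : (0 : ℝ) ≤ 1 / 2) (by norm_num : (0 : ℝ) ≤ 1 / 2)
      (by norm_num)
    convert hI hxy hz (by norm_num : (0 : ℝ) ≤ 2 / 3) (by norm_num : (0 : ℝ) ≤ 1 / 3)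
      (by norm_num) using 1
    simp only [smul_eq_mul]
    ring
  rcases same_side_or_eq_of_three x y z ((x + y + z) / 3) with hc | hc | hc
  · exact hJensenPair_popoviciu_of_same_side_or_eq hconc hgpos hpair hx hy hz hm (by ring) hc
  · have := hJensenPair_popoviciu_of_same_side_or_eq hconc hgpos hpair hy hz hx hm (by ring) hc
    linarith
  · have := hJensenPair_popoviciu_of_same_side_or_eq hconc hgpos hpair hz hx hy hm (by ring) hc
    linarith
end
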